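/- Let (k : K → X, f : X → M) be a Schreier extension with K commutative and cancellative, and let P = {(x, y, z) ∈ X × X × X : (x, y) ∈ R_E and (y, z) ∈ R_E}, a submonoid of X × X × X. Then the function p : P → X that sends (x, y, z) to k(b) + x, where b is the unique element of K with z = k(b) + y, is well defined and is a monoid homomorphism; moreover p satisfies p(x, x, z) = z for all (x, x, z) ∈ P and p(x, y, y) = x for all (x, y, y) ∈ P. (Thus the relation R_E centralises itself, with connector p.) -/

import Mathlib

/-- A monoid extension: `K`, `X` additive monoids (not assumed commutative),
`M` a multiplicative monoid, `k : K → X` an injective monoid homomorphism whose image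
is `{x | f x = 1}`, and `f : X → M` a surjective monoid homomorphism. -/
structure MonoidExtension {K X M : Type*} [AddMonoid K] [AddMonoid X] [Monoid M]
    (k : K → X) (f : X → M) : Prop where
  k_add : ∀ a b : K, k (a + b) = k a + k b
  k_zero : k 0 = 0
  k_inj : Function.Injective k
  ker_eq : ∀ x : X, f x = 1 ↔ x ∈ Set.range k
  f_add : ∀ x y : X, f (x + y) = f x * f y
  f_zero : f 0 = 1
  f_surj : Function.Surjective f

/-- The set `B_m` of representatives of `m`. -/
def Reps {K X M : Type*} [AddMonoid K] [AddMonoid X] [Monoid M]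
    (k : K → X) (f : X → M) (m : M) : Set X :=
  {u | f u = m ∧ ∀ x : X, f x = m → ∃! a : K, x = k a + u}

/-- A monoid extension is a Schreier extension if every `m` has a representative. -/
def IsSchreier {K X M : Type*} [AddMonoid K] [AddMonoid X] [Monoid M]
    (k : K → X) (f : X → M) : Prop :=
  ∀ m : M, (Reps k f m).Nonempty

/-!
Compare elements with a representative of their fibre of `f`. Since `K` is cancellative, it
acts freely on `X` by `a • x = k a + x`, so the `b` with `z = k b + y` is unique. Since `K` is
commutative, moving `k b` across `x` from right to left changes `b` only through the fibre of `x`: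
`x + k b = k e + x` with `e` depending on `f x` and `b` alone. Hence the same element of `K` leads
from `y + y'` to `z + z'` as from `x + x'` to `p (x, y, z) + p (x', y', z')` as soon as
`f x = f y`; so `R_E` even centralises the kernel congruence of `f`, which contains `R_E`.
-/

/-- The relation `R_E` of an extension: `RE k x z` says that `z` is a translate of `x` by `k`. -/
def RE {K X : Type*} [AddMonoid X] (k : K → X) (x z : X) : Prop :=
  ∃ a : K, z = k a + x

/-- The connector `p (x, y, z) = k b + x`, where `z = k b + y`. It is total: the choice of `b` is
arbitrary when `(y, z)` is not in `R_E`. -/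
noncomputable def connector {K X : Type*} [AddMonoid K] [AddMonoid X] (k : K → X)
    (s : X × X × X) : X :=
  k (Classical.epsilon fun b : K => s.2.2 = k b + s.2.1) + s.1

namespace MonoidExtension

section Noncommutative

variable {K X M : Type*} [AddMonoid K] [AddMonoid X] [Monoid M] {k : K → X} {f : X → M}

theorem map_k (hE : MonoidExtension k f) (a : K) : f (k a) = 1 :=
  (hE.ker_eq (k a)).2 ⟨a, rfl⟩

theorem map_k_add (hE : MonoidExtension k f) (a : K) (x : X) : f (k a + x) = f x := by
  rw [hE.f_add, hE.map_k, one_mul]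

theorem map_add_k (hE : MonoidExtension k f) (x : X) (a : K) : f (x + k a) = f x := by
  rw [hE.f_add, hE.map_k, mul_one]

theorem map_eq_of_RE (hE : MonoidExtension k f) {x y : X} (h : RE k x y) : f y = f x := by
  obtain ⟨a, rfl⟩ := h
  exact hE.map_k_add a x

theorem k_add_injective_of_mem_Reps (hE : MonoidExtension k f) {m : M} {u : X}
    (hu : u ∈ Reps k f m) : Function.Injective fun a : K => k a + u := fun b _ h =>
  (hu.2 (k b + u) ((hE.map_k_add b u).trans hu.1)).unique rfl h

theorem k_add_injective [IsRightCancelAdd K] (hE : MonoidExtension k f) (hS : IsSchreier k f)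
    (y : X) : Function.Injective fun a : K => k a + y := by
  intro b c h
  obtain ⟨u, hu⟩ := hS (f y)
  obtain ⟨d, rfl, -⟩ := hu.2 y rfl
  refine add_right_cancel (b := d) (hE.k_add_injective_of_mem_Reps hu ?_)
  simpa only [hE.k_add, add_assoc] using h

theorem connector_apply [IsRightCancelAdd K] (hE : MonoidExtension k f) (hS : IsSchreier k f)
    (x : X) {y z : X} {b : K} (hz : z = k b + y) : connector k (x, y, z) = k b + x := by
  have h_eps : z = k (Classical.epsilon fun a : K => z = k a + y) + y :=
    Classical.epsilon_spec (p := fun a : K => z = k a + y) ⟨b, hz⟩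
  exact congrArg (k · + x) (hE.k_add_injective hS y (h_eps.symm.trans hz))

theorem connector_self_left [IsRightCancelAdd K] (hE : MonoidExtension k f) (hS : IsSchreier k f)
    {x z : X} (hxz : RE k x z) : connector k (x, x, z) = z := by
  obtain ⟨b, rfl⟩ := hxz
  exact hE.connector_apply hS x rfl

theorem connector_self_right [IsRightCancelAdd K] (hE : MonoidExtension k f) (hS : IsSchreier k f)
    (x y : X) : connector k (x, y, y) = x := by
  have hy : y = k 0 + y := by rw [hE.k_zero, zero_add]
  rw [hE.connector_apply hS x hy, hE.k_zero, zero_add]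

end Noncommutative

section Commutative

variable {K X M : Type*} [AddCommMonoid K] [AddMonoid X] [Monoid M] {k : K → X} {f : X → M}

theorem exists_forall_add_k_eq_k_add (hE : MonoidExtension k f) (hS : IsSchreier k f)
    (m : M) (b : K) : ∃ e : K, ∀ x : X, f x = m → x + k b = k e + x := by
  obtain ⟨u, hu⟩ := hS m
  obtain ⟨e, he, -⟩ := hu.2 (u + k b) ((hE.map_add_k u b).trans hu.1)
  refine ⟨e, fun x hx => ?_⟩
  obtain ⟨d, rfl, -⟩ := hu.2 x hx
  calc k d + u + k b = k d + (k e + u) := by rw [add_assoc, he]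
    _ = k (d + e) + u := by rw [hE.k_add, add_assoc]
    _ = k (e + d) + u := by rw [add_comm d e]
    _ = k e + (k d + u) := by rw [hE.k_add, add_assoc]

theorem exists_forall_k_add_add_k_add_eq (hE : MonoidExtension k f) (hS : IsSchreier k f)
    (m : M) (b b' : K) :
    ∃ c : K, ∀ x x' : X, f x = m → (k b + x) + (k b' + x') = k c + (x + x') := by
  obtain ⟨e, he⟩ := hE.exists_forall_add_k_eq_k_add hS m b'
  refine ⟨b + e, fun x x' hx => ?_⟩
  calc (k b + x) + (k b' + x') = k b + (x + k b') + x' := by simp only [add_assoc]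
    _ = k b + (k e + x) + x' := by rw [he x hx]
    _ = k (b + e) + (x + x') := by simp only [hE.k_add, add_assoc]

theorem connector_add [IsRightCancelAdd K] (hE : MonoidExtension k f) (hS : IsSchreier k f)
    {x y z x' y' z' : X} (hxy : f x = f y) (hyz : RE k y z) (hyz' : RE k y' z') :
    connector k (x + x', y + y', z + z') = connector k (x, y, z) + connector k (x', y', z') := by
  obtain ⟨b, hb⟩ := hyz
  obtain ⟨b', hb'⟩ := hyz'
  obtain ⟨c, hc⟩ := hE.exists_forall_k_add_add_k_add_eq hS (f y) b b'
  have hz : z + z' = k c + (y + y') := by rw [hb, hb', hc y y' rfl]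
  rw [hE.connector_apply hS _ hz, hE.connector_apply hS x hb, hE.connector_apply hS x' hb',
    hc x x' hxy]

end Commutative

end MonoidExtension

theorem RE_self_centralising_general {K X M : Type*} [AddCommMonoid K] [IsRightCancelAdd K]
    [AddMonoid X] [Monoid M]
    (k : K → X) (f : X → M) (hE : MonoidExtension k f) (hS : IsSchreier k f) :
    ∃ p : X × X × X → X,
      (∀ x y z : X, ∀ b : K, z = k b + y → p (x, y, z) = k b + x) ∧
      p 0 = 0 ∧
      (∀ s t : X × X × X, f s.1 = f s.2.1 → RE k s.2.1 s.2.2 → RE k t.2.1 t.2.2 →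
        p (s + t) = p s + p t) ∧
      (∀ x z : X, RE k x z → p (x, x, z) = z) ∧
      (∀ x y : X, p (x, y, y) = x) :=
  ⟨connector k, fun x _ _ _ hz => hE.connector_apply hS x hz, hE.connector_self_right hS 0 0,
    fun _ _ => hE.connector_add hS, fun _ _ => hE.connector_self_left hS,
    hE.connector_self_right hS⟩

/-- Section 5 (self-centralisation of `R_E`): for a cc-Schreier extension, on the
submonoid `P = {(x, y, z) | (x, y) ∈ R_E ∧ (y, z) ∈ R_E}` of `X × X × X` the assignment
`(x, y, z) ↦ k b + x`, where `b` is the unique element with `z = k b + y`, is a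
well-defined monoid homomorphism `p` satisfying the connector (Mal'tsev) identities
`p (x, x, z) = z` and `p (x, y, y) = x`. -/
theorem RE_self_centralising {K X M : Type*} [AddCommMonoid K] [IsCancelAdd K]
    [AddMonoid X] [Monoid M]
    (k : K → X) (f : X → M) (hE : MonoidExtension k f) (hS : IsSchreier k f) :
    ∃ p : X × X × X → X,
      (∀ x y z : X, (∃ a : K, y = k a + x) → ∀ b : K, z = k b + y → p (x, y, z) = k b + x) ∧
      p 0 = 0 ∧
      (∀ s t : X × X × X,
        ((∃ a : K, s.2.1 = k a + s.1) ∧ (∃ b : K, s.2.2 = k b + s.2.1)) →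
        ((∃ a : K, t.2.1 = k a + t.1) ∧ (∃ b : K, t.2.2 = k b + t.2.1)) →
        p (s + t) = p s + p t) ∧
      (∀ x z : X, (∃ b : K, z = k b + x) → p (x, x, z) = z) ∧
      (∀ x y : X, (∃ a : K, y = k a + x) → p (x, y, y) = x) := by
  obtain ⟨p, hp, hp_zero, hp_add, hp_left, hp_right⟩ := RE_self_centralising_general k f hE hS
  exact ⟨p, fun x y z _ b hz => hp x y z b hz, hp_zero,
    fun s t hs ht => hp_add s t (hE.map_eq_of_RE hs.1).symm hs.2 ht.2, hp_left,
    fun x y _ => hp_right x y⟩
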